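/- Let F be a formal group law over a commutative ring R. For all f, g ∈ R((z)), λ ∈ R, and m, n ≥ 0: 𝒮^F_0 f = f; (𝒮^F_1 f)·p_F = f' (the formal derivative), i.e. (𝒮^F_1 f)(z)·F^{0,1}(z,0)^{-1} = f'(z); 𝒮^F_n(λf + g) = λ𝒮^F_n f + 𝒮^F_n g; the Leibniz rule 𝒮^F_n(f·g) = Σ_{i+j=n} (𝒮^F_i f)·(𝒮^F_j g); and the composition rule 𝒮^F_m(𝒮^F_n f) = 𝒮^F_n(𝒮^F_m f) = Σ_{k≥0} binomF(k; m,n)·𝒮^F_k f, where the sum is finite (binomF(k; m,n) = 0 for k > m+n). -/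

import Mathlib

/-!
Coefficient-wise formal calculus for vertex `F`-algebras, following
M. Upmeier, "Vertex F-Algebras and Their Associated Lie Algebra".

Series in one, two or three variables are represented by their coefficient
functions `ℤ → R`, `ℤ → ℤ → R`, …; products are given by coefficient-wise
(finite) sums, expressed via `finsum` (`∑ᶠ`).
-/

open scoped BigOperators

noncomputable section

/-- Generalized binomial coefficient `C(n,k) = n(n-1)⋯(n-k+1)/k!` for `n : ℤ`, `k : ℕ`. -/
def zbinom (n : ℤ) (k : ℕ) : ℤ :=
  if 0 ≤ n then (n.toNat.choose k : ℤ)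
  else (-1 : ℤ) ^ k * (((k : ℤ) - n - 1).toNat.choose k : ℤ)

/-- `C(n,m)` for integer `m`, with `C(n,m) = 0` for `m < 0`. -/
def zbinomZ (n m : ℤ) : ℤ := if m < 0 then 0 else zbinom n m.toNat

/-- `(-1)^n` for `n : ℤ`. -/
def msign (n : ℤ) : ℤ := if Even n then 1 else -1

section Series

variable {R : Type*} [CommRing R] {M : Type*} [AddCommGroup M] [Module R M]

/-- Product of a one-variable series with `R`-coefficients with an `M`-valued one. -/
def mulS (f : ℤ → R) (g : ℤ → M) : ℤ → M := fun n => ∑ᶠ i : ℤ, f i • g (n - i)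

/-- The constant series `1` (one variable). -/
def oneS (R : Type*) [CommRing R] : ℤ → R := fun n => if n = 0 then 1 else 0

/-- Natural powers of a one-variable series. -/
def pow1 (f : ℤ → R) : ℕ → ℤ → R
  | 0 => oneS R
  | k + 1 => mulS f (pow1 f k)

/-- Product of two-variable series. -/
def mulS2 (f : ℤ → ℤ → R) (g : ℤ → ℤ → M) : ℤ → ℤ → M :=
  fun a b => ∑ᶠ p : ℤ × ℤ, f p.1 p.2 • g (a - p.1) (b - p.2)

/-- The constant series `1` (two variables). -/
def oneS2 (R : Type*) [CommRing R] : ℤ → ℤ → R := fun a b => if a = 0 ∧ b = 0 then 1 else 0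

/-- Natural powers of a two-variable series. -/
def pow2 (f : ℤ → ℤ → R) : ℕ → ℤ → ℤ → R
  | 0 => oneS2 R
  | k + 1 => mulS2 f (pow2 f k)

/-- `f ∈ M((z))`: only finitely many negative powers. -/
def IsLaurent (f : ℤ → M) : Prop := ∃ N : ℤ, ∀ n : ℤ, n < N → f n = 0

/-- `f ∈ M((z,w))`: only finitely many nonzero coefficients with some negative index. -/
def IsLaurent2 (f : ℤ → ℤ → M) : Prop :=
  {p : ℤ × ℤ | (p.1 < 0 ∨ p.2 < 0) ∧ f p.1 p.2 ≠ 0}.Finite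

/-- Formal derivative of a one-variable series. -/
def fderiv1 (f : ℤ → R) : ℤ → R := fun n => ((n + 1 : ℤ) : R) * f (n + 1)

/-- The polynomial `z - w` as a two-variable series. -/
def zmw (R : Type*) [CommRing R] : ℤ → ℤ → R :=
  fun i j => if i = 1 ∧ j = 0 then 1 else if i = 0 ∧ j = 1 then -1 else 0

/-- `∂/∂w` of a two-variable series. -/
def d01 (f : ℤ → ℤ → R) : ℤ → ℤ → R := fun i j => ((j + 1 : ℤ) : R) * f i (j + 1)

/-- `∂/∂z` of a two-variable series. -/
def d10 (f : ℤ → ℤ → R) : ℤ → ℤ → R := fun i j => ((i + 1 : ℤ) : R) * f (i + 1) j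

/-- Substitution `p(f(z,w))` of a two-variable series (zero constant term) into a
one-variable power series `p`. -/
def comp2 (p : ℤ → R) (f : ℤ → ℤ → R) : ℤ → ℤ → R :=
  fun a b => ∑ᶠ m : ℕ, p (m : ℤ) * pow2 f m a b

/-- Substitution `p(f(z))` of a one-variable series (zero constant term) into a
one-variable power series `p`. -/
def comp1 (p : ℤ → R) (f : ℤ → R) : ℤ → R :=
  fun a => ∑ᶠ m : ℕ, p (m : ℤ) * pow1 f m a

/-- `(G - z)/z` for `G ≡ z (mod w)`. -/
def hzS (G : ℤ → ℤ → R) : ℤ → ℤ → R := fun i j => G (i + 1) j - oneS2 R i j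

/-- Integer powers `i_{z,w} G^n`, for `G ≡ z (mod w)`, expanded in `R((z))⟦w⟧`:
the Newton expansion `z^n ∑_k C(n,k) ((G-z)/z)^k`. -/
def izwPow (G : ℤ → ℤ → R) (n : ℤ) : ℤ → ℤ → R :=
  fun a b => ∑ᶠ k : ℕ, (zbinom n k : R) * pow2 (hzS G) k (a - n) b

/-- `(G - w)/w` for `G ≡ w (mod z)`. -/
def hwS (G : ℤ → ℤ → R) : ℤ → ℤ → R := fun i j => G i (j + 1) - oneS2 R i j

/-- Integer powers `i_{w,z} G^n`, for `G ≡ w (mod z)`, expanded in `R((w))⟦z⟧`. -/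
def iwzPow (G : ℤ → ℤ → R) (n : ℤ) : ℤ → ℤ → R :=
  fun a b => ∑ᶠ k : ℕ, (zbinom n k : R) * pow2 (hwS G) k a (b - n)

/-- `(G + w)/(-w)` for `G ≡ ι(w) (mod z)`. -/
def hwNegS (G : ℤ → ℤ → R) : ℤ → ℤ → R := fun i j => -G i (j + 1) - oneS2 R i j

/-- Integer powers `i_{w,z} G^n`, for `G ≡ -w(1+⋯) (mod z)` (e.g. `G = F(z, ι w)`),
expanded in `R((w))⟦z⟧`. -/
def iwzPowNeg (G : ℤ → ℤ → R) (n : ℤ) : ℤ → ℤ → R :=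
  fun a b => (msign n : R) * ∑ᶠ k : ℕ, (zbinom n k : R) * pow2 (hwNegS G) k a (b - n)

/-- `(f + z)/(-z)` for a series `f = -z(1 + ⋯)` such as `ι(z)`. -/
def hS (f : ℤ → R) : ℤ → R := fun j => -f (j + 1) - oneS R j

/-- Integer powers `f(z)^n` (`n : ℤ`) for `f = -z(1+⋯)`, e.g. `f = ι(z)`. -/
def iotaPow (f : ℤ → R) (n : ℤ) : ℤ → R :=
  fun a => (msign n : R) * ∑ᶠ k : ℕ, (zbinom n k : R) * pow1 (hS f) k (a - n)

/-- `f - 1` for a power series with constant term `1`. -/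
def hOneS (f : ℤ → R) : ℤ → R := fun j => f j - oneS R j

/-- Multiplicative inverse of a power series with constant term `1`. -/
def invOne (f : ℤ → R) : ℤ → R :=
  fun a => ∑ᶠ k : ℕ, ((-1 : R) ^ k) * pow1 (hOneS f) k a

end Series

/-- A (one-dimensional, commutative) formal group law `F(z,w)` over `R`, together with
its (unique) inverse `ι`. -/
structure FormalGroupLaw (R : Type*) [CommRing R] where
  F : ℤ → ℤ → R
  F_supp : ∀ i j : ℤ, i < 0 ∨ j < 0 → F i j = 0
  /-- `F(z,0) = z`, so that `F(z,w) = z + w + O(zw)` using commutativity. -/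
  F_modw : ∀ i : ℤ, F i 0 = if i = 1 then 1 else 0
  F_comm : ∀ i j : ℤ, F i j = F j i
  /-- associativity `F(F(z,w),v) = F(z,F(w,v))`, coefficient-wise. -/
  F_assoc : ∀ a b c : ℤ,
    (∑ᶠ m : ℕ, F (m : ℤ) c * pow2 F m a b) = ∑ᶠ n : ℕ, F a (n : ℤ) * pow2 F n b c
  /-- the inverse `ι(z) = -z + O(z²)`. -/
  inv : ℤ → R
  inv_supp : ∀ n : ℤ, n < 1 → inv n = 0
  inv_one : inv 1 = -1
  /-- `F(z, ι(z)) = 0`, coefficient-wise. -/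
  inv_eq : ∀ n : ℤ, (∑ᶠ p : ℤ × ℕ, F p.1 (p.2 : ℤ) * pow1 inv p.2 (n - p.1)) = 0

namespace FormalGroupLaw

variable {R : Type*} [CommRing R] {M : Type*} [AddCommGroup M] [Module R M]

/-- The series `F(z, ι(w))`. -/
def Fzi (𝓕 : FormalGroupLaw R) : ℤ → ℤ → R :=
  fun i j => ∑ᶠ m : ℕ, 𝓕.F i (m : ℤ) * pow1 𝓕.inv m j

/-- The `F`-delta distribution `z⁻¹δ_F(w/z) = i_{z,w}F(z,ιw)⁻¹ - i_{w,z}F(z,ιw)⁻¹`. -/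
def delta (𝓕 : FormalGroupLaw R) : ℤ → ℤ → R :=
  fun a b => izwPow 𝓕.Fzi (-1) a b - iwzPowNeg 𝓕.Fzi (-1) a b

/-- `p_F(z) = F^{0,1}(z,0)⁻¹`, the coefficient series of the invariant 1-form. -/
def pF (𝓕 : FormalGroupLaw R) : ℤ → R := invOne (fun i => 𝓕.F i 1)

/-- `F`-residue: the coefficient of `z⁻¹` in `f(z)·p_F(z)`. -/
def resF (𝓕 : FormalGroupLaw R) (f : ℤ → M) : M := ∑ᶠ i : ℤ, 𝓕.pF i • f (-1 - i)

/-- The `F`-hyperderivative `𝒮^F_n f`, defined by `i_{z,w}f(F(z,w)) = ∑_n (𝒮^F_n f)(z) wⁿ`. -/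
def hyper (𝓕 : FormalGroupLaw R) (n : ℕ) (f : ℤ → R) : ℤ → R :=
  fun a => ∑ᶠ m : ℤ, f m * izwPow 𝓕.F m a (n : ℤ)

/-- `F`-binomial coefficients: `i_{z,w}F(z,w)^n = ∑_{i,j} binomF(n;i,j) z^i w^j`. -/
def binomF (𝓕 : FormalGroupLaw R) (n i j : ℤ) : R := izwPow 𝓕.F n i j

/-- `φ` is a logarithm of `F`: `φ(F(z,w)) = φ(z) + φ(w)`, `φ(0) = 0`, `φ'(0) = 1`. -/
def IsLogarithm (𝓕 : FormalGroupLaw R) (φ : ℤ → R) : Prop :=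
  (∀ n : ℤ, n < 0 → φ n = 0) ∧ φ 0 = 0 ∧ φ 1 = 1 ∧
  ∀ a b : ℤ, (∑ᶠ m : ℕ, φ (m : ℤ) * pow2 𝓕.F m a b)
    = (if b = 0 then φ a else 0) + (if a = 0 then φ b else 0)

end FormalGroupLaw

section Vertex

variable {R : Type*} [CommRing R] {V : Type*} [AddCommGroup V] [Module R V]

/-- For `c = ∑_m c_m v^m ∈ V((v))`, the substitution `v ↦ F(z,w)` (coefficient `(k,n)` of
`z^k w^n`, expanded in `V((z))⟦w⟧`). -/
def substF (𝓕 : FormalGroupLaw R) (c : ℤ → V) : ℤ → ℤ → V :=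
  fun k n => ∑ᶠ m : ℤ, izwPow 𝓕.F m k n • c m

/-- Coefficients of `i_{z,w} Y(a, F(z,w)) (Y(b,w)c)`, where `Ya v = Y(a,·)v` and
`d = Y(b,·)c`. -/
def substFProd (𝓕 : FormalGroupLaw R) (Ya : V → ℤ → V) (d : ℤ → V) : ℤ → ℤ → V :=
  fun k n => ∑ᶠ q : ℤ × ℤ, izwPow 𝓕.F q.1 k (n - q.2) • Ya (d q.2) q.1

end Vertex

/-- A vertex `F`-algebra `(V, 𝟙, 𝒮, Y)` over the formal group law `𝓕`.
`Y a b : ℤ → V` records the coefficients of `Y(a,z)b = ∑_k (Y a b k) z^k`, and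
`S n` is the component `𝒮⁽ⁿ⁾` of the `F`-shift operator `𝒮(z) = ∑_{n≥0} 𝒮⁽ⁿ⁾ zⁿ`. -/
structure VertexFAlgebra (R : Type*) [CommRing R] (𝓕 : FormalGroupLaw R)
    (V : Type*) [AddCommGroup V] [Module R V] where
  vac : V
  S : ℕ → V →ₗ[R] V
  Y : V →ₗ[R] V →ₗ[R] (ℤ → V)
  /-- `Y(a,z)b ∈ V((z))`. -/
  Y_laurent : ∀ a b : V, IsLaurent (Y a b)
  /-- `Y(a,z)𝟙` is holomorphic. -/
  vac_holo : ∀ (a : V) (k : ℤ), k < 0 → Y a vac k = 0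
  /-- `Y(a,z)𝟙|_{z=0} = a`. -/
  creation : ∀ a : V, Y a vac 0 = a
  /-- `Y(𝟙,z) = id`. -/
  Y_vac : ∀ (b : V) (k : ℤ), Y vac b k = if k = 0 then b else 0
  /-- `𝒮(0) = id`. -/
  S_zero : S 0 = LinearMap.id
  /-- `𝒮(z)𝟙 = 𝟙`. -/
  S_vac : ∀ n : ℕ, 1 ≤ n → S n vac = 0
  /-- `𝒮(z) ∘ 𝒮(w) = 𝒮(F(z,w))`, coefficient-wise. -/
  S_comp : ∀ (a : V) (i j : ℕ),
    S i (S j a) = ∑ᶠ m : ℕ, pow2 𝓕.F m (i : ℤ) (j : ℤ) • S m a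
  /-- `F`-translation covariance `Y(𝒮(w)a, z)b = i_{z,w} Y(a,F(z,w))b`. -/
  translation : ∀ (a b : V) (k : ℤ) (n : ℕ),
    Y (S n a) b k = substF 𝓕 (Y a b) k (n : ℤ)
  /-- weak `F`-associativity. -/
  weak_assoc : ∀ a b c : V, ∃ N : ℕ,
    mulS2 (pow2 𝓕.F N) (fun k l => Y (Y a b k) c l)
      = mulS2 (pow2 𝓕.F N) (substFProd 𝓕 (fun v => Y a v) (Y b c))
  /-- skew symmetry `Y(a,z)b = 𝒮(z)(Y(b,ι(z))a)`, coefficient-wise. -/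
  skew : ∀ (a b : V) (k : ℤ),
    Y a b k = ∑ᶠ q : ℕ × ℤ, iotaPow 𝓕.inv q.2 (k - (q.1 : ℤ)) • S q.1 (Y b a q.2)

end

section FormalCalculus

open HahnSeries

variable {R : Type*} [CommRing R]

theorem zbinom_eq_choose (n : ℤ) (k : ℕ) : zbinom n k = Ring.choose n k := by
  unfold zbinom
  split_ifs with h
  · lift n to ℕ using h
    simpa using (Ring.choose_natCast (R := ℤ) n k).symm
  · obtain ⟨r, rfl⟩ : ∃ r : ℕ, n = -(r + 1 : ℤ) := ⟨(-n - 1).toNat, by omega⟩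
    rw [Ring.choose_neg, show (k : ℤ) - -(r + 1 : ℤ) - 1 = ((r + k : ℕ) : ℤ) by push_cast; ring,
      show (r + 1 : ℤ) + k - 1 = ((r + k : ℕ) : ℤ) by push_cast; ring, Ring.choose_natCast]
    rw [Int.toNat_natCast]
    simp [Units.smul_def, Int.coe_negOnePow_natCast]

theorem mulS_coeff (x y : HahnSeries ℤ R) : mulS x.coeff y.coeff = (x * y).coeff := by
  classical
  funext n
  rw [HahnSeries.coeff_mul, mulS]
  rw [finsum_eq_sum_of_support_subset
    (s := (Finset.antidiagonal x.isPWO_support y.isPWO_support n).image Prod.fst)]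
  · rw [Finset.sum_image]
    · refine Finset.sum_congr rfl fun p hp => ?_
      rw [Finset.mem_antidiagonal] at hp
      rw [smul_eq_mul, ← hp.2.2, add_sub_cancel_left]
    · intro p hp q hq h
      rw [Finset.mem_coe, Finset.mem_antidiagonal] at hp hq
      ext <;> grind
  · intro i hi
    simp only [Function.mem_support, smul_eq_mul] at hi
    simp only [Finset.coe_image, Set.mem_image, Finset.mem_coe, Finset.mem_antidiagonal]
    exact ⟨(i, n - i), ⟨left_ne_zero_of_mul hi, right_ne_zero_of_mul hi, by simp⟩, rfl⟩

theorem finite_support_mul (x y : HahnSeries ℤ R) (n : ℤ) :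
    (Function.support fun i => x.coeff i * y.coeff (n - i)).Finite := by
  classical
  refine ((Finset.antidiagonal x.isPWO_support y.isPWO_support n).image
    Prod.fst).finite_toSet.subset fun i hi => ?_
  simp only [Function.mem_support] at hi
  simp only [Finset.coe_image, Set.mem_image, Finset.mem_coe, Finset.mem_antidiagonal]
  exact ⟨(i, n - i), ⟨left_ne_zero_of_mul hi, right_ne_zero_of_mul hi, by simp⟩, rfl⟩

theorem oneS_eq_coeff : oneS R = (1 : HahnSeries ℤ R).coeff := by
  funext n
  simp [oneS, HahnSeries.coeff_one]

theorem pow1_coeff (x : HahnSeries ℤ R) (k : ℕ) : pow1 x.coeff k = (x ^ k).coeff := by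
  induction k with
  | zero => rw [pow1, pow_zero, oneS_eq_coeff]
  | succ k ih => rw [pow1, ih, mulS_coeff, pow_succ']

/-- The coefficient function of an element of `R((z))⟦w⟧`. -/
noncomputable def coeff2 (P : PowerSeries (HahnSeries ℤ R)) : ℤ → ℤ → R :=
  fun a b => if b < 0 then 0 else (PowerSeries.coeff b.toNat P).coeff a

theorem coeff2_natCast (P : PowerSeries (HahnSeries ℤ R)) (a : ℤ) (b : ℕ) :
    coeff2 P a b = (PowerSeries.coeff b P).coeff a := by
  simp [coeff2]

theorem coeff2_of_neg (P : PowerSeries (HahnSeries ℤ R)) (a : ℤ) {b : ℤ} (hb : b < 0) :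
    coeff2 P a b = 0 := by
  simp [coeff2, hb]

theorem mulS2_coeff2 (P Q : PowerSeries (HahnSeries ℤ R)) :
    mulS2 (coeff2 P) (coeff2 Q) = coeff2 (P * Q) := by
  classical
  funext a b
  unfold mulS2
  rcases lt_or_ge b 0 with hb | hb
  · rw [coeff2_of_neg _ _ hb, ← finsum_zero (α := ℤ × ℤ)]
    refine finsum_congr fun p => ?_
    rcases lt_or_ge p.2 0 with h | h
    · simp [coeff2_of_neg _ _ h]
    · rw [coeff2_of_neg Q _ (by omega : b - p.2 < 0), smul_zero]
  lift b to ℕ using hb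
  have key : ∀ j : ℤ, j ∉ Set.Icc 0 (b : ℤ) → ∀ i, coeff2 P i j • coeff2 Q (a - i) (b - j) = 0 := by
    intro j hj i
    rcases lt_or_ge j 0 with h | h
    · simp [coeff2_of_neg _ _ h]
    · rw [coeff2_of_neg Q _ (by simp at hj; omega), smul_zero]
  have key2 : ∀ j ≤ b, ∀ i : ℤ, coeff2 P i (j : ℤ) • coeff2 Q (a - i) (b - j) =
      (PowerSeries.coeff j P).coeff i * (PowerSeries.coeff (b - j) Q).coeff (a - i) := by
    intro j hj i
    rw [← Nat.cast_sub hj, coeff2_natCast, coeff2_natCast, smul_eq_mul]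
  have hfin : (Function.support fun p : ℤ × ℤ =>
      coeff2 P p.2 p.1 • coeff2 Q (a - p.2) (b - p.1)).Finite := by
    refine ((Finset.range (b + 1)).finite_toSet.biUnion fun j _ =>
      (finite_support_mul (PowerSeries.coeff j P) (PowerSeries.coeff (b - j) Q) a).image
        (fun i => ((j : ℤ), i))).subset ?_
    rintro ⟨j, i⟩ hij
    have hj : j ∈ Set.Icc 0 (b : ℤ) := by
      by_contra h
      exact hij (key j h i)
    obtain ⟨h0, h1⟩ := hj
    lift j to ℕ using h0
    simp only [Set.mem_iUnion, Set.mem_image]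
    refine ⟨j, by simp; omega, i, ?_, rfl⟩
    rw [Function.mem_support, ← key2 j (by omega)]
    exact hij
  rw [← finsum_comp_equiv (Equiv.prodComm ℤ ℤ)]
  simp only [Equiv.prodComm_apply, Prod.fst_swap, Prod.snd_swap]
  rw [finsum_curry _ hfin,
    finsum_eq_sum_of_support_subset (s := (Finset.range (b + 1)).image Nat.cast),
    Finset.sum_image (by simp), coeff2_natCast, PowerSeries.coeff_mul,
    Finset.Nat.sum_antidiagonal_eq_sum_range_succ
      (fun i j => PowerSeries.coeff i P * PowerSeries.coeff j Q), HahnSeries.coeff_sum]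
  · refine Finset.sum_congr rfl fun j hj => ?_
    rw [← mulS_coeff, mulS]
    exact finsum_congr fun i => key2 j (by simp at hj; omega) i
  · intro j hj
    by_contra h
    refine hj ?_
    simp only
    rw [← finsum_zero (α := ℤ)]
    refine finsum_congr fun i => key j (fun hj' => h ?_) i
    simp only [Finset.coe_image, Set.mem_image, Finset.coe_range, Set.mem_Iio]
    exact ⟨j.toNat, by have := hj'.2; omega, by have := hj'.1; omega⟩

theorem oneS2_eq_coeff2 : oneS2 R = coeff2 (1 : PowerSeries (HahnSeries ℤ R)) := by
  funext a b
  rcases lt_or_ge b 0 with hb | hb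
  · rw [coeff2_of_neg _ _ hb, oneS2, if_neg (by omega)]
  lift b to ℕ using hb
  rw [coeff2_natCast, PowerSeries.coeff_one, oneS2]
  split_ifs <;> simp_all [HahnSeries.coeff_one]

theorem pow2_coeff2 (P : PowerSeries (HahnSeries ℤ R)) (k : ℕ) :
    pow2 (coeff2 P) k = coeff2 (P ^ k) := by
  induction k with
  | zero => rw [pow2, pow_zero, oneS2_eq_coeff2]
  | succ k ih => rw [pow2, ih, mulS2_coeff2, pow_succ']

theorem pow2_swap {G : ℤ → ℤ → R} (hG : ∀ i j, G i j = G j i) (k : ℕ) (a b : ℤ) :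
    pow2 G k a b = pow2 G k b a := by
  induction k generalizing a b with
  | zero => simp [pow2, oneS2, and_comm]
  | succ k ih =>
    simp only [pow2, mulS2]
    rw [← finsum_comp_equiv (Equiv.prodComm ℤ ℤ)]
    refine finsum_congr fun p => ?_
    simp only [Equiv.prodComm_apply, Prod.fst_swap, Prod.snd_swap]
    rw [hG, ih]

/-- Elements of `R((z))⟦w⟧` all of whose monomials have total degree at least `d`. -/
def DegGE (d : ℤ) (P : PowerSeries (HahnSeries ℤ R)) : Prop :=
  ∀ (n : ℕ) (a : ℤ), a + n < d → (PowerSeries.coeff n P).coeff a = 0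

theorem coeff_mul_eq_zero_of_lt {x y : HahnSeries ℤ R} {d e a : ℤ}
    (hx : ∀ i < d, x.coeff i = 0) (hy : ∀ i < e, y.coeff i = 0) (h : a < d + e) :
    (x * y).coeff a = 0 := by
  rw [← mulS_coeff, mulS, ← finsum_zero (α := ℤ)]
  refine finsum_congr fun i => ?_
  rcases lt_or_ge i d with hi | hi
  · rw [hx i hi, zero_smul]
  · rw [hy _ (by omega), smul_zero]

theorem DegGE.mul {d e : ℤ} {P Q : PowerSeries (HahnSeries ℤ R)} (hP : DegGE d P)
    (hQ : DegGE e Q) : DegGE (d + e) (P * Q) := by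
  intro n a h
  rw [PowerSeries.coeff_mul, HahnSeries.coeff_sum]
  refine Finset.sum_eq_zero fun p hp => ?_
  rw [Finset.HasAntidiagonal.mem_antidiagonal] at hp
  exact coeff_mul_eq_zero_of_lt (d := d - p.1) (e := e - p.2) (fun i hi => hP _ _ (by omega))
    (fun i hi => hQ _ _ (by omega)) (by omega)

theorem DegGE.pow {P : PowerSeries (HahnSeries ℤ R)} (hP : DegGE 0 P) (k : ℕ) :
    DegGE 0 (P ^ k) := by
  induction k with
  | zero =>
    intro n a h
    rw [pow_zero, PowerSeries.coeff_one]
    split_ifs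
    · rw [HahnSeries.coeff_one, if_neg (by omega)]
    · rfl
  | succ k ih => rw [pow_succ]; simpa using ih.mul hP

/-- An additive map on `R((z))` vanishes if it kills all monomials and all series of sufficiently
high order. -/
theorem addMonoidHom_eq_zero {A : Type*} [AddCommGroup A] (θ : HahnSeries ℤ R →+ A)
    (hs : ∀ i r, θ (single i r) = 0) (N : ℤ)
    (hN : ∀ f : HahnSeries ℤ R, (∀ i < N, f.coeff i = 0) → θ f = 0) (f : HahnSeries ℤ R) :
    θ f = 0 := by
  have key : ∀ (n : ℕ) (f : HahnSeries ℤ R), (∀ i < N - n, f.coeff i = 0) → θ f = 0 := by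
    intro n
    induction n with
    | zero => simpa using hN
    | succ n ih =>
      intro f hf
      have h : θ (f - single (N - (n + 1)) (f.coeff (N - (n + 1)))) = 0 := by
        refine ih _ fun i hi => ?_
        rw [HahnSeries.coeff_sub, HahnSeries.coeff_single]
        split_ifs with h
        · rw [h, sub_self]
        · rw [hf i (by push_cast; omega), sub_zero]
      rwa [map_sub, hs, sub_zero] at h
  refine key (N - f.order).toNat f fun i hi => HahnSeries.coeff_eq_zero_of_lt_order ?_
  omega

theorem bddBelow_support {f : ℤ → R} {N : ℤ} (hf : ∀ n < N, f n = 0) :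
    BddBelow (Function.support f) :=
  ⟨N, fun n hn => not_lt.mp fun h => hn (hf n h)⟩

theorem exists_hahnSeries {f : ℤ → R} (hf : IsLaurent f) : ∃ x : HahnSeries ℤ R, x.coeff = f := by
  obtain ⟨N, hN⟩ := hf
  exact ⟨HahnSeries.ofSuppBddBelow f (bddBelow_support hN), rfl⟩

theorem exists_forall_lt_coeff_eq_zero (x : HahnSeries ℤ R) : ∃ N : ℤ, ∀ i < N, x.coeff i = 0 :=
  ⟨x.order, fun _ => HahnSeries.coeff_eq_zero_of_lt_order⟩

theorem finsum_int_eq_finsum_nat {A : Type*} [AddCommMonoid A] {g : ℤ → A}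
    (hg : ∀ i < 0, g i = 0) : ∑ᶠ i, g i = ∑ᶠ n : ℕ, g n := by
  rw [← finsum_mem_range (f := g) (g := ((↑) : ℕ → ℤ)) Nat.cast_injective, finsum_mem_def,
    Set.indicator_eq_self.mpr]
  intro i hi
  exact ⟨i.toNat, Int.toNat_of_nonneg (not_lt.mp fun h => hi (hg i h))⟩

theorem ringHom_single_eq {A : Type*} [CommRing A] {θ₁ θ₂ : HahnSeries ℤ R →+* A}
    (hC : ∀ r, θ₁ (C r) = θ₂ (C r)) (hX : θ₁ (single 1 1) = θ₂ (single 1 1)) (i : ℤ) (r : R) :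
    θ₁ (single i r) = θ₂ (single i r) := by
  have mul_inv (θ : HahnSeries ℤ R →+* A) : θ (single 1 1) * θ (single (-1) 1) = 1 := by
    rw [← map_mul, single_mul_single]
    simp
  have hinv : θ₁ (single (-1) 1) = θ₂ (single (-1) 1) :=
    left_inv_eq_right_inv (a := θ₁ (single 1 1)) (by rw [mul_comm, mul_inv])
      (by rw [hX, mul_inv])
  have hpow : θ₁ (single i 1) = θ₂ (single i 1) := by
    induction i using Int.induction_on with
    | zero => simp
    | succ i ih =>
      have h : (single ((i : ℤ) + 1) 1 : HahnSeries ℤ R) = single (i : ℤ) 1 * single 1 1 := by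
        simp [single_mul_single]
      rw [h, map_mul, map_mul, ih, hX]
    | pred i ih =>
      have h : (single (-(i : ℤ) - 1) 1 : HahnSeries ℤ R) =
          single (-(i : ℤ)) 1 * single (-1) 1 := by
        rw [single_mul_single, mul_one, sub_eq_add_neg]
      rw [h, map_mul, map_mul, ih, hinv]
  have h : (single i r : HahnSeries ℤ R) = C r * single i 1 := by
    rw [C_apply, single_mul_single, zero_add, mul_one]
  rw [h, map_mul, map_mul, hC, hpow]

section Substitution

variable {A : Type*} [CommRing A]

/-- The coefficient of `w^m v^n` in an element of `A⟦w⟧⟦v⟧`. -/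
noncomputable abbrev bicoeff (m n : ℕ) : PowerSeries (PowerSeries A) →+ A :=
  (PowerSeries.coeff (R := A) m).toAddMonoidHom.comp
    (PowerSeries.coeff (R := PowerSeries A) n).toAddMonoidHom

theorem bicoeff_mul (m n : ℕ) (P Q : PowerSeries (PowerSeries A)) :
    bicoeff m n (P * Q) = ∑ p ∈ Finset.HasAntidiagonal.antidiagonal n,
      ∑ q ∈ Finset.HasAntidiagonal.antidiagonal m, bicoeff q.1 p.1 P * bicoeff q.2 p.2 Q := by
  simp [PowerSeries.coeff_mul]

/-- Evaluation of a polynomial with coefficients in `A` at an element of `A⟦w⟧⟦v⟧`. -/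
noncomputable abbrev evalBi (Q : PowerSeries (PowerSeries A)) :
    Polynomial A →+* PowerSeries (PowerSeries A) :=
  Polynomial.eval₂RingHom ((PowerSeries.C).comp PowerSeries.C) Q

theorem bicoeff_evalBi (Q : PowerSeries (PowerSeries A)) (p : Polynomial A) (m n : ℕ) :
    bicoeff m n (evalBi Q p) = p.sum fun k c => c * bicoeff m n (Q ^ k) := by
  rw [Polynomial.coe_eval₂RingHom, Polynomial.eval₂_eq_sum, Polynomial.sum, Polynomial.sum,
    map_sum]
  simp

theorem bicoeff_evalBi_eq_of_coeff_eq {Q : PowerSeries (PowerSeries A)} {m n N : ℕ}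
    (hQ : ∀ k, N ≤ k → bicoeff m n (Q ^ k) = 0) {p q : Polynomial A}
    (h : ∀ k < N, p.coeff k = q.coeff k) :
    bicoeff m n (evalBi Q p) = bicoeff m n (evalBi Q q) := by
  rw [← sub_eq_zero, ← map_sub, ← map_sub, bicoeff_evalBi]
  refine Finset.sum_eq_zero fun k _ => ?_
  rcases lt_or_ge k N with hk | hk
  · simp only [Polynomial.coeff_sub, h k hk, sub_self, zero_mul]
  · simp only [hQ k hk, mul_zero]

/-- Substitution of an element `Q` of `A⟦w⟧⟦v⟧` with zero constant term into a power series. -/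
noncomputable def substBi (Q : PowerSeries (PowerSeries A))
    (hQ : ∀ m n k, m + n < k → bicoeff m n (Q ^ k) = 0) :
    PowerSeries A →+* PowerSeries (PowerSeries A) where
  toFun p := PowerSeries.mk fun n => PowerSeries.mk fun m =>
    bicoeff m n (evalBi Q (PowerSeries.trunc (m + n + 1) p))
  map_zero' := by ext; simp
  map_one' := by
    ext n m
    simp only [PowerSeries.trunc_one]
    rw [map_one]
    simp
  map_add' p q := by
    ext n m
    simp
  map_mul' p q := by
    ext n m
    have key (r : PowerSeries A) (m' n' : ℕ) (h : m' + n' ≤ m + n) :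
        bicoeff m' n' (evalBi Q (PowerSeries.trunc (m' + n' + 1) r)) =
          bicoeff m' n' (evalBi Q (PowerSeries.trunc (m + n + 1) r)) := by
      refine bicoeff_evalBi_eq_of_coeff_eq (hQ m' n') fun k hk => ?_
      rw [PowerSeries.coeff_trunc, PowerSeries.coeff_trunc, if_pos hk, if_pos (by omega)]
    trans bicoeff m n (evalBi Q (PowerSeries.trunc (m + n + 1) p) *
      evalBi Q (PowerSeries.trunc (m + n + 1) q))
    · rw [← map_mul, PowerSeries.coeff_mk, PowerSeries.coeff_mk]
      refine bicoeff_evalBi_eq_of_coeff_eq (hQ m n) fun k hk => ?_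
      rw [PowerSeries.coeff_trunc, if_pos hk,
        PowerSeries.coeff_mul_eq_coeff_trunc_mul_trunc _ _ hk, ← Polynomial.coe_mul,
        Polynomial.coeff_coe]
    · rw [bicoeff_mul, PowerSeries.coeff_mul, map_sum]
      refine Finset.sum_congr rfl fun s hs => ?_
      rw [PowerSeries.coeff_mul]
      refine Finset.sum_congr rfl fun t ht => ?_
      rw [Finset.HasAntidiagonal.mem_antidiagonal] at hs ht
      simp only [PowerSeries.coeff_mk]
      rw [key p _ _ (by omega), key q _ _ (by omega)]

theorem bicoeff_substBi {Q : PowerSeries (PowerSeries A)}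
    (hQ : ∀ m n k, m + n < k → bicoeff m n (Q ^ k) = 0) (p : PowerSeries A) (m n : ℕ) :
    bicoeff m n (substBi Q hQ p) =
      ∑ k ∈ Finset.range (m + n + 1), PowerSeries.coeff k p * bicoeff m n (Q ^ k) := by
  trans bicoeff m n (evalBi Q (PowerSeries.trunc (m + n + 1) p))
  · simp [substBi]
  · rw [bicoeff_evalBi, Polynomial.sum_over_range' _ (by simp) (m + n + 1)
      (PowerSeries.natDegree_trunc_lt p (m + n))]
    refine Finset.sum_congr rfl fun k hk => ?_
    rw [PowerSeries.coeff_trunc, if_pos (Finset.mem_range.mp hk)]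

theorem substBi_C {Q : PowerSeries (PowerSeries A)}
    (hQ : ∀ m n k, m + n < k → bicoeff m n (Q ^ k) = 0) (c : A) :
    substBi Q hQ (PowerSeries.C c) = PowerSeries.C (PowerSeries.C c) := by
  ext n m
  trans bicoeff m n (evalBi Q (PowerSeries.trunc (m + n + 1) (PowerSeries.C c)))
  · simp [substBi]
  · rw [PowerSeries.trunc_C, Polynomial.coe_eval₂RingHom, Polynomial.eval₂_C]
    rfl

end Substitution


theorem invOne_eq_coeff {u : PowerSeries R} (hu : PowerSeries.constantCoeff u = 1) :
    ∃ v : PowerSeries R, v * u = 1 ∧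
      invOne (ofPowerSeries ℤ R u).coeff = (ofPowerSeries ℤ R v).coeff := by
  have hx : PowerSeries.HasSubst (1 - u) :=
    PowerSeries.HasSubst.of_constantCoeff_zero' (by simp [hu])
  refine ⟨(PowerSeries.mk 1 : PowerSeries R).subst (1 - u), ?_, ?_⟩
  · have h := congrArg (PowerSeries.substAlgHom hx) (PowerSeries.mk_one_mul_one_sub_eq_one R)
    rw [map_mul, map_sub, map_one, PowerSeries.coe_substAlgHom, PowerSeries.subst_X hx,
      sub_sub_cancel] at h
    exact h
  · have hone : hOneS (ofPowerSeries ℤ R u).coeff = (ofPowerSeries ℤ R (u - 1)).coeff := by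
      funext j
      rw [hOneS, oneS_eq_coeff, map_sub, map_one, HahnSeries.coeff_sub]
    funext a
    rw [invOne, hone]
    simp only [pow1_coeff, ← map_pow]
    rcases lt_or_ge a 0 with ha | ha
    · have h0 (w : PowerSeries R) : (ofPowerSeries ℤ R w).coeff a = 0 := by
        rw [PowerSeries.coeff_coe, if_pos ha]
      simp only [h0, mul_zero, finsum_zero]
    · lift a to ℕ using ha
      simp only [ofPowerSeries_apply_coeff]
      rw [PowerSeries.coeff_subst' hx]
      refine finsum_congr fun k => ?_
      rw [← neg_sub u 1, neg_pow (u - 1)]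
      rw [show ((-1 : PowerSeries R)) ^ k = PowerSeries.C ((-1) ^ k) by simp,
        PowerSeries.coeff_C_mul]
      simp

namespace FormalGroupLaw

variable (𝓕 : FormalGroupLaw R)

theorem hzS_eq_zero_of_lt {i j : ℤ} (h : i + j < 0 ∨ j < 0 ∨ i < -1) : hzS 𝓕.F i j = 0 := by
  rw [hzS, oneS2, if_neg (by omega), sub_zero]
  rcases eq_or_ne j 0 with rfl | hj
  · rw [𝓕.F_modw, if_neg (by omega)]
  · exact 𝓕.F_supp _ _ (by omega)

/-- The series `(F(z,w) - z)/z` as an element of `R((z))⟦w⟧`. -/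
noncomputable def hz : PowerSeries (HahnSeries ℤ R) :=
  PowerSeries.mk fun j => HahnSeries.ofSuppBddBelow (fun i => hzS 𝓕.F i j)
    (bddBelow_support (N := -1) fun _ _ => 𝓕.hzS_eq_zero_of_lt (by omega))

theorem coeff_hz (i : ℤ) (j : ℕ) : (PowerSeries.coeff j 𝓕.hz).coeff i = hzS 𝓕.F i j := by
  rw [hz, PowerSeries.coeff_mk, HahnSeries.coeff_ofSuppBddBelow]

theorem coeff2_hz : coeff2 𝓕.hz = hzS 𝓕.F := by
  funext i j
  rcases lt_or_ge j 0 with hj | hj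
  · rw [coeff2_of_neg _ _ hj, 𝓕.hzS_eq_zero_of_lt (by omega)]
  · lift j to ℕ using hj
    rw [coeff2_natCast, coeff_hz]

theorem constantCoeff_hz : PowerSeries.constantCoeff 𝓕.hz = 0 := by
  rw [← PowerSeries.coeff_zero_eq_constantCoeff_apply]
  ext i
  rw [coeff_hz, hzS, Nat.cast_zero, 𝓕.F_modw]
  simp [oneS2]

theorem hasSubst_hz : PowerSeries.HasSubst 𝓕.hz :=
  PowerSeries.HasSubst.of_constantCoeff_zero' 𝓕.constantCoeff_hz

theorem degGE_hz : DegGE 0 𝓕.hz := fun n a h => by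
  rw [coeff_hz, 𝓕.hzS_eq_zero_of_lt (Or.inl h)]

/-- The power `F(z,w)^k` as an element of `R((z))⟦w⟧`. -/
noncomputable def izw (k : ℤ) : PowerSeries (HahnSeries ℤ R) :=
  PowerSeries.C (single k 1) * (PowerSeries.binomialSeries ℤ k).subst 𝓕.hz

theorem coeff_izw (k a : ℤ) (n : ℕ) : (PowerSeries.coeff n (𝓕.izw k)).coeff a =
    ∑ᶠ d : ℕ, (zbinom k d : R) * (PowerSeries.coeff n (𝓕.hz ^ d)).coeff (a - k) := by
  rw [izw, PowerSeries.coeff_C_mul, HahnSeries.coeff_single_mul, one_mul,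
    PowerSeries.coeff_subst' 𝓕.hasSubst_hz, ← HahnSeries.coeff.addMonoidHom_apply,
    AddMonoidHom.map_finsum _ (PowerSeries.coeff_subst_finite' 𝓕.hasSubst_hz _ _)]
  refine finsum_congr fun d => ?_
  rw [zbinom_eq_choose, PowerSeries.binomialSeries_coeff, smul_eq_mul, mul_one,
    Algebra.smul_def, eq_intCast, ← zsmul_eq_mul, ← zsmul_eq_mul]
  exact map_zsmul (HahnSeries.coeff.addMonoidHom (a - k)) _ _

theorem coeff2_izw (k : ℤ) : coeff2 (𝓕.izw k) = izwPow 𝓕.F k := by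
  funext a b
  simp only [izwPow, ← coeff2_hz, pow2_coeff2]
  rcases lt_or_ge b 0 with hb | hb
  · simp [coeff2_of_neg _ _ hb]
  · lift b to ℕ using hb
    simp only [coeff2_natCast, coeff_izw]

theorem coeff_izw_eq_izwPow (k a : ℤ) (n : ℕ) :
    (PowerSeries.coeff n (𝓕.izw k)).coeff a = izwPow 𝓕.F k a n := by
  rw [← coeff2_izw, coeff2_natCast]

theorem izw_add (j k : ℤ) : 𝓕.izw (j + k) = 𝓕.izw j * 𝓕.izw k := by
  rw [izw, izw, izw, PowerSeries.binomialSeries_add, PowerSeries.subst_mul 𝓕.hasSubst_hz,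
    mul_mul_mul_comm, ← map_mul, single_mul_single, mul_one]

theorem izw_zero : 𝓕.izw 0 = 1 := by
  rw [izw, PowerSeries.binomialSeries_zero, ← PowerSeries.coe_substAlgHom 𝓕.hasSubst_hz,
    map_one (PowerSeries.substAlgHom _), mul_one]
  exact map_one PowerSeries.C

theorem izw_natCast (k : ℕ) : 𝓕.izw k = 𝓕.izw 1 ^ k := by
  induction k with
  | zero => rw [Nat.cast_zero, izw_zero, pow_zero]
  | succ k ih => rw [Nat.cast_succ, izw_add, ih, pow_succ]

theorem coeff_izw_one (a : ℤ) (n : ℕ) : (PowerSeries.coeff n (𝓕.izw 1)).coeff a = 𝓕.F a n := by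
  have h : (PowerSeries.binomialSeries ℤ (1 : ℤ)) = 1 + PowerSeries.X := by
    simpa using PowerSeries.binomialSeries_nat (R := ℤ) (A := ℤ) 1
  rw [izw, PowerSeries.coeff_C_mul, HahnSeries.coeff_single_mul, one_mul, h,
    ← PowerSeries.coe_substAlgHom 𝓕.hasSubst_hz, map_add, map_one, PowerSeries.coe_substAlgHom,
    PowerSeries.subst_X 𝓕.hasSubst_hz, map_add, HahnSeries.coeff_add, coeff_hz, hzS,
    oneS2_eq_coeff2, coeff2_natCast, sub_add_cancel, add_sub_cancel]

theorem coeff2_izw_one : coeff2 (𝓕.izw 1) = 𝓕.F := by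
  funext a b
  rcases lt_or_ge b 0 with hb | hb
  · rw [coeff2_of_neg _ _ hb, 𝓕.F_supp _ _ (Or.inr hb)]
  · lift b to ℕ using hb
    rw [coeff2_natCast, coeff_izw_one]

theorem pow2_F (k : ℕ) : pow2 𝓕.F k = izwPow 𝓕.F k := by
  rw [← coeff2_izw_one, pow2_coeff2, ← izw_natCast, coeff2_izw, coeff2_izw_one]

theorem degGE_izw (k : ℤ) : DegGE k (𝓕.izw k) := fun n a h => by
  rw [coeff_izw, ← finsum_zero (α := ℕ)]
  refine finsum_congr fun d => ?_
  rw [𝓕.degGE_hz.pow d n _ (by omega), mul_zero]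

theorem izwPow_eq_zero_of_lt {k a b : ℤ} (h : a + b < k) : izwPow 𝓕.F k a b = 0 := by
  rw [← coeff2_izw]
  rcases lt_or_ge b 0 with hb | hb
  · rw [coeff2_of_neg _ _ hb]
  · lift b to ℕ using hb
    rw [coeff2_natCast, 𝓕.degGE_izw k b a h]

theorem hyper_eq_zero_of_lt {f : ℤ → R} {N a : ℤ} {n : ℕ} (hf : ∀ i < N, f i = 0)
    (h : a + n < N) : 𝓕.hyper n f a = 0 := by
  rw [hyper, ← finsum_zero (α := ℤ)]
  refine finsum_congr fun m => ?_
  rcases lt_or_ge m N with hm | hm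
  · rw [hf m hm, zero_mul]
  · rw [𝓕.izwPow_eq_zero_of_lt (by omega), mul_zero]

theorem hyper_hasFiniteSupport (f : HahnSeries ℤ R) (n : ℕ) (a : ℤ) :
    (fun m => f.coeff m * izwPow 𝓕.F m a n).HasFiniteSupport := by
  refine (Set.finite_Icc f.order (a + n)).subset fun m hm => ⟨?_, ?_⟩
  · exact HahnSeries.order_le_of_coeff_ne_zero (left_ne_zero_of_mul hm)
  · exact not_lt.mp fun h => right_ne_zero_of_mul hm (𝓕.izwPow_eq_zero_of_lt h)

theorem hyper_add (f g : HahnSeries ℤ R) (n : ℕ) :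
    𝓕.hyper n (f + g).coeff = 𝓕.hyper n f.coeff + 𝓕.hyper n g.coeff := by
  funext a
  simp only [hyper, HahnSeries.coeff_add, Pi.add_apply, add_mul]
  exact finsum_add_distrib (𝓕.hyper_hasFiniteSupport f n a) (𝓕.hyper_hasFiniteSupport g n a)

/-- The expansion `i_{z,w} f(F(z,w))` as an additive map `R((z)) → R((z))⟦w⟧`. -/
noncomputable def shiftAdd : HahnSeries ℤ R →+ PowerSeries (HahnSeries ℤ R) :=
  AddMonoidHom.mk' (fun f => PowerSeries.mk fun n => HahnSeries.ofSuppBddBelow (𝓕.hyper n f.coeff)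
    (bddBelow_support (N := f.order - n) fun _ _ => 𝓕.hyper_eq_zero_of_lt
      (fun _ => HahnSeries.coeff_eq_zero_of_lt_order) (by omega))) fun f g => by
    ext n a
    simp only [PowerSeries.coeff_mk, map_add, HahnSeries.coeff_ofSuppBddBelow, hyper_add,
      HahnSeries.coeff_add, Pi.add_apply]

theorem coeff_shiftAdd (f : HahnSeries ℤ R) (n : ℕ) :
    (PowerSeries.coeff n (𝓕.shiftAdd f)).coeff = 𝓕.hyper n f.coeff := by
  rw [shiftAdd, AddMonoidHom.mk'_apply, PowerSeries.coeff_mk, HahnSeries.coeff_ofSuppBddBelow]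

theorem degGE_shiftAdd {N : ℤ} {f : HahnSeries ℤ R} (hf : ∀ i < N, f.coeff i = 0) :
    DegGE N (𝓕.shiftAdd f) := fun n a h => by
  rw [coeff_shiftAdd, 𝓕.hyper_eq_zero_of_lt hf h]

theorem shiftAdd_single (i : ℤ) (r : R) :
    𝓕.shiftAdd (single i r) = PowerSeries.C (C r) * 𝓕.izw i := by
  ext n a
  rw [coeff_shiftAdd, hyper, finsum_eq_single _ i, coeff_single_same, PowerSeries.coeff_C_mul,
    C_apply, HahnSeries.coeff_single_zero_mul, coeff_izw_eq_izwPow]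
  intro m hm
  rw [coeff_single_of_ne hm, zero_mul]

theorem shiftAdd_mul (f g : HahnSeries ℤ R) :
    𝓕.shiftAdd (f * g) = 𝓕.shiftAdd f * 𝓕.shiftAdd g := by
  let defect (n : ℕ) (a : ℤ) : HahnSeries ℤ R →+ HahnSeries ℤ R →+ R :=
    AddMonoidHom.mk' (fun f => AddMonoidHom.mk' (fun g => (PowerSeries.coeff n
      (𝓕.shiftAdd (f * g) - 𝓕.shiftAdd f * 𝓕.shiftAdd g)).coeff a)
      fun g g' => by simp only [mul_add, map_add, map_sub, coeff_add, coeff_sub]; ring)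
      fun f f' => by
        ext g
        simp only [add_mul, map_add, map_sub, coeff_add, coeff_sub, AddMonoidHom.mk'_apply,
          AddMonoidHom.add_apply]
        ring
  have high (n : ℕ) (a M N : ℤ) (h : a + n < M + N) (f g : HahnSeries ℤ R)
      (hf : ∀ i < M, f.coeff i = 0) (hg : ∀ i < N, g.coeff i = 0) : defect n a f g = 0 := by
    simp only [defect, AddMonoidHom.mk'_apply, map_sub, HahnSeries.coeff_sub]
    rw [𝓕.degGE_shiftAdd (N := M + N) (fun i hi => coeff_mul_eq_zero_of_lt hf hg hi) n a h,
      ((𝓕.degGE_shiftAdd hf).mul (𝓕.degGE_shiftAdd hg)) n a h, sub_zero]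
  have single_single (n : ℕ) (a i j : ℤ) (r s : R) :
      defect n a (single i r) (single j s) = 0 := by
    simp only [defect, AddMonoidHom.mk'_apply]
    rw [single_mul_single, shiftAdd_single, shiftAdd_single, shiftAdd_single, izw_add,
      mul_mul_mul_comm, ← map_mul, ← map_mul, sub_self]
    simp
  have key (n : ℕ) (a : ℤ) (f g : HahnSeries ℤ R) : defect n a f g = 0 := by
    obtain ⟨M, hM⟩ := exists_forall_lt_coeff_eq_zero g
    refine addMonoidHom_eq_zero ((defect n a).flip g) (fun i r => ?_) (a + n + 1 - M)
      (fun f hf => high n a _ M (by omega) f g hf hM) f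
    refine addMonoidHom_eq_zero (defect n a (single i r)) (single_single n a i · r ·)
      (a + n + 1 - i) (fun g hg => high n a i _ (by omega) _ g (fun j hj => ?_) hg) g
    rw [coeff_single_of_ne hj.ne]
  ext n a
  have h := key n a f g
  simp only [defect, AddMonoidHom.mk'_apply, map_sub, HahnSeries.coeff_sub] at h
  exact sub_eq_zero.mp h

/-- The expansion `i_{z,w} f(F(z,w))` as a ring homomorphism `R((z)) → R((z))⟦w⟧`. -/
noncomputable def shift : HahnSeries ℤ R →+* PowerSeries (HahnSeries ℤ R) where
  __ := 𝓕.shiftAdd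
  map_one' := by
    change 𝓕.shiftAdd (single 0 1) = 1
    rw [shiftAdd_single, izw_zero, map_one, map_one, mul_one]
  map_mul' := 𝓕.shiftAdd_mul

theorem coeff_shift (f : HahnSeries ℤ R) (n : ℕ) :
    (PowerSeries.coeff n (𝓕.shift f)).coeff = 𝓕.hyper n f.coeff :=
  𝓕.coeff_shiftAdd f n

theorem shift_single (i : ℤ) (r : R) :
    𝓕.shift (single i r) = PowerSeries.C (C r) * 𝓕.izw i :=
  𝓕.shiftAdd_single i r

theorem shift_C (r : R) : 𝓕.shift (C r) = PowerSeries.C (C r) := by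
  rw [C_apply, shift_single, izw_zero, mul_one, C_apply]

theorem hyper_mulS (f g : HahnSeries ℤ R) (n : ℕ) (a : ℤ) :
    𝓕.hyper n (mulS f.coeff g.coeff) a =
      ∑ j ∈ Finset.range (n + 1), mulS (𝓕.hyper j f.coeff) (𝓕.hyper (n - j) g.coeff) a := by
  rw [mulS_coeff, ← coeff_shift, map_mul, PowerSeries.coeff_mul,
    Finset.Nat.sum_antidiagonal_eq_sum_range_succ
      (fun i j => PowerSeries.coeff i (𝓕.shift f) * PowerSeries.coeff j (𝓕.shift g)),
    HahnSeries.coeff_sum]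
  refine Finset.sum_congr rfl fun j _ => ?_
  rw [← mulS_coeff, coeff_shift, coeff_shift]

theorem coeff_hz_pow_of_lt {n d : ℕ} (h : n < d) : PowerSeries.coeff n (𝓕.hz ^ d) = 0 :=
  PowerSeries.X_pow_dvd_iff.mp
    (pow_dvd_pow_of_dvd (PowerSeries.X_dvd_iff.mpr 𝓕.constantCoeff_hz) d) n h

theorem hyper_zero (f : ℤ → R) : 𝓕.hyper 0 f = f := by
  funext a
  have h (m : ℤ) : izwPow 𝓕.F m a (0 : ℕ) = if a = m then 1 else 0 := by
    rw [← coeff_izw_eq_izwPow, coeff_izw, finsum_eq_single _ 0]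
    · simp [zbinom_eq_choose, HahnSeries.coeff_one, sub_eq_zero]
    · intro d hd
      rw [𝓕.coeff_hz_pow_of_lt (Nat.pos_of_ne_zero hd), HahnSeries.coeff_zero, mul_zero]
  rw [hyper, finsum_eq_single _ a, h, if_pos rfl, mul_one]
  intro m hm
  rw [h, if_neg hm.symm, mul_zero]

theorem izwPow_one_right (k a : ℤ) : izwPow 𝓕.F k a (1 : ℕ) = k * 𝓕.F (a - k + 1) 1 := by
  rw [← coeff_izw_eq_izwPow, coeff_izw, finsum_eq_single _ 1]
  · rw [pow_one, coeff_hz, hzS, oneS2, if_neg (by simp), sub_zero, zbinom_eq_choose,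
      Ring.choose_one_right, Nat.cast_one]
  · intro d hd
    rcases Nat.lt_or_gt_of_ne hd with h | h
    · obtain rfl : d = 0 := by omega
      simp [PowerSeries.coeff_one]
    · rw [𝓕.coeff_hz_pow_of_lt h, HahnSeries.coeff_zero, mul_zero]

theorem hyper_one (f : ℤ → R) : 𝓕.hyper 1 f = mulS (fun i => 𝓕.F i 1) (fderiv1 f) := by
  funext a
  rw [hyper, mulS, ← finsum_comp_equiv (Equiv.subLeft (a + 1))]
  refine finsum_congr fun i => ?_
  rw [izwPow_one_right, fderiv1, Equiv.subLeft_apply, smul_eq_mul]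
  rw [show a - (a + 1 - i) + 1 = i by ring, show a - i + 1 = a + 1 - i by ring]
  ring

theorem exists_F_one_eq_coeff : ∃ u : PowerSeries R, PowerSeries.constantCoeff u = 1 ∧
    (fun i => 𝓕.F i 1) = (ofPowerSeries ℤ R u).coeff := by
  refine ⟨PowerSeries.mk fun n => 𝓕.F n 1, ?_, ?_⟩
  · rw [← PowerSeries.coeff_zero_eq_constantCoeff_apply, PowerSeries.coeff_mk, 𝓕.F_comm,
      Nat.cast_zero, 𝓕.F_modw, if_pos rfl]
  · funext i
    rcases lt_or_ge i 0 with hi | hi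
    · rw [PowerSeries.coeff_coe, if_pos hi, 𝓕.F_supp _ _ (Or.inl hi)]
    · lift i to ℕ using hi
      rw [ofPowerSeries_apply_coeff, PowerSeries.coeff_mk]

theorem mulS_pF_hyper_one {f : ℤ → R} (hf : IsLaurent f) :
    mulS 𝓕.pF (𝓕.hyper 1 f) = fderiv1 f := by
  obtain ⟨x, hx⟩ : ∃ x : HahnSeries ℤ R, x.coeff = fderiv1 f := by
    obtain ⟨N, hN⟩ := hf
    refine exists_hahnSeries ⟨N - 1, fun n hn => ?_⟩
    rw [fderiv1, hN _ (by omega), mul_zero]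
  obtain ⟨u, hu, hF⟩ := 𝓕.exists_F_one_eq_coeff
  obtain ⟨v, hv, hinv⟩ := invOne_eq_coeff hu
  rw [hyper_one, pF, hF, hinv, ← hx, mulS_coeff, mulS_coeff, ← mul_assoc, ← map_mul, hv, map_one,
    one_mul]

theorem hyper_linear (f g : HahnSeries ℤ R) (lam : R) (n : ℕ) :
    𝓕.hyper n (fun z => lam * f.coeff z + g.coeff z) =
      fun z => lam * 𝓕.hyper n f.coeff z + 𝓕.hyper n g.coeff z := by
  have h : (fun z => lam * f.coeff z + g.coeff z) = (C lam * f + g).coeff := by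
    funext z
    rw [C_apply, HahnSeries.coeff_add, HahnSeries.coeff_single_zero_mul]
  funext z
  rw [h, ← coeff_shift, map_add, map_mul, shift_C, map_add, PowerSeries.coeff_C_mul, C_apply,
    HahnSeries.coeff_add, HahnSeries.coeff_single_zero_mul, coeff_shift, coeff_shift]

/-- The series `F(w,v)` as an element of `R((z))⟦w⟧⟦v⟧`. -/
noncomputable def biF : PowerSeries (PowerSeries (HahnSeries ℤ R)) :=
  PowerSeries.map (PowerSeries.map C)
    (PowerSeries.mk fun n => PowerSeries.mk fun m => 𝓕.F m n)

theorem bicoeff_biF_pow (k m n : ℕ) :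
    bicoeff m n (𝓕.biF ^ k) = C (𝓕.binomF k m n) := by
  have h : PowerSeries.map (ofPowerSeries ℤ R)
      (PowerSeries.mk fun n => PowerSeries.mk fun m => 𝓕.F m n) = 𝓕.izw 1 := by
    ext n a
    rw [PowerSeries.coeff_map, PowerSeries.coeff_mk, coeff_izw_one]
    rcases lt_or_ge a 0 with ha | ha
    · rw [PowerSeries.coeff_coe, if_pos ha, 𝓕.F_supp _ _ (Or.inl ha)]
    · lift a to ℕ using ha
      rw [ofPowerSeries_apply_coeff, PowerSeries.coeff_mk]
  rw [binomF, ← coeff_izw_eq_izwPow, izw_natCast, ← h, ← map_pow, PowerSeries.coeff_map,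
    ofPowerSeries_apply_coeff, biF, ← map_pow]
  rfl

theorem binomF_eq_zero_of_lt {k m n : ℤ} (h : m + n < k) : 𝓕.binomF k m n = 0 :=
  𝓕.izwPow_eq_zero_of_lt h

theorem binomF_comm (k : ℕ) (m n : ℤ) : 𝓕.binomF k m n = 𝓕.binomF k n m := by
  rw [binomF, binomF, ← pow2_F, pow2_swap 𝓕.F_comm]

theorem bicoeff_biF_pow_eq_zero (m n k : ℕ) (h : m + n < k) : bicoeff m n (𝓕.biF ^ k) = 0 := by
  rw [bicoeff_biF_pow, 𝓕.binomF_eq_zero_of_lt (by omega), map_zero]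

/-- The expansion of `f(F(F(z,w),v))`. -/
noncomputable def shiftTwice :
    HahnSeries ℤ R →+* PowerSeries (PowerSeries (HahnSeries ℤ R)) :=
  (PowerSeries.map 𝓕.shift).comp 𝓕.shift

/-- The expansion of `f(F(z,F(w,v)))`. -/
noncomputable def shiftBi :
    HahnSeries ℤ R →+* PowerSeries (PowerSeries (HahnSeries ℤ R)) :=
  (substBi 𝓕.biF 𝓕.bicoeff_biF_pow_eq_zero).comp 𝓕.shift

theorem coeff_bicoeff_shiftTwice (f : HahnSeries ℤ R) (m n : ℕ) :
    (bicoeff m n (𝓕.shiftTwice f)).coeff = 𝓕.hyper m (𝓕.hyper n f.coeff) := by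
  rw [← coeff_shift, ← coeff_shift]
  rfl

theorem coeff_bicoeff_shiftBi (f : HahnSeries ℤ R) (m n : ℕ) (a : ℤ) :
    (bicoeff m n (𝓕.shiftBi f)).coeff a =
      ∑ᶠ k : ℕ, 𝓕.binomF k m n * 𝓕.hyper k f.coeff a := by
  rw [shiftBi, RingHom.comp_apply, bicoeff_substBi, HahnSeries.coeff_sum,
    finsum_eq_sum_of_support_subset (s := Finset.range (m + n + 1))]
  · refine Finset.sum_congr rfl fun k _ => ?_
    rw [bicoeff_biF_pow, mul_comm, C_apply, HahnSeries.coeff_single_zero_mul, coeff_shift]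
  · intro k hk
    rw [Finset.coe_range, Set.mem_Iio]
    by_contra h
    exact left_ne_zero_of_mul hk (𝓕.binomF_eq_zero_of_lt (by omega))

theorem hyper_single_one (n : ℕ) (a : ℤ) :
    𝓕.hyper n (single 1 (1 : R)).coeff a = 𝓕.F a n := by
  rw [← coeff_shift, shift_single, map_one, map_one, one_mul, coeff_izw_one]

theorem shiftTwice_single_one : 𝓕.shiftTwice (single 1 1) = 𝓕.shiftBi (single 1 1) := by
  ext n m a
  change (bicoeff m n (𝓕.shiftTwice (single 1 1))).coeff a =
    (bicoeff m n (𝓕.shiftBi (single 1 1))).coeff a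
  have h := 𝓕.F_assoc a m n
  simp only [pow2_F] at h
  rw [coeff_bicoeff_shiftTwice, coeff_bicoeff_shiftBi, hyper, finsum_int_eq_finsum_nat]
  · simp only [hyper_single_one]
    rw [h]
    exact finsum_congr fun k => mul_comm _ _
  · intro i hi
    rw [hyper_single_one, 𝓕.F_supp _ _ (Or.inl hi), zero_mul]

theorem shiftTwice_eq_shiftBi (f : HahnSeries ℤ R) : 𝓕.shiftTwice f = 𝓕.shiftBi f := by
  ext n m a
  let defect : HahnSeries ℤ R →+ R := (HahnSeries.coeff.addMonoidHom a).comp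
    ((bicoeff m n).comp (𝓕.shiftTwice.toAddMonoidHom - 𝓕.shiftBi.toAddMonoidHom))
  have hdefect (f : HahnSeries ℤ R) : defect f =
      (bicoeff m n (𝓕.shiftTwice f)).coeff a - (bicoeff m n (𝓕.shiftBi f)).coeff a := by
    simp [defect]
  refine sub_eq_zero.mp ((hdefect f).symm.trans ?_)
  refine addMonoidHom_eq_zero defect (fun i r => ?_) (a + m + n + 1) (fun f hf => ?_) f
  · rw [hdefect, ringHom_single_eq (fun r => ?_) 𝓕.shiftTwice_single_one, sub_self]
    rw [shiftTwice, shiftBi, RingHom.comp_apply, RingHom.comp_apply, shift_C, substBi_C,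
      PowerSeries.map_C, shift_C]
  · rw [hdefect, coeff_bicoeff_shiftTwice, coeff_bicoeff_shiftBi,
      𝓕.hyper_eq_zero_of_lt (N := a + m + 1)
        (fun i hi => 𝓕.hyper_eq_zero_of_lt hf (by omega)) (by omega), zero_sub, neg_eq_zero,
      ← finsum_zero (α := ℕ)]
    refine finsum_congr fun k => ?_
    rcases lt_or_ge (m + n) k with hk | hk
    · rw [𝓕.binomF_eq_zero_of_lt (by omega), zero_mul]
    · rw [𝓕.hyper_eq_zero_of_lt hf (by omega), mul_zero]

theorem hyper_hyper (f : HahnSeries ℤ R) (m n : ℕ) :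
    𝓕.hyper m (𝓕.hyper n f.coeff) =
      fun a => ∑ᶠ k : ℕ, 𝓕.binomF k m n * 𝓕.hyper k f.coeff a := by
  funext a
  rw [← coeff_bicoeff_shiftTwice, shiftTwice_eq_shiftBi, coeff_bicoeff_shiftBi]

end FormalGroupLaw

end FormalCalculus

/-- basic identities for `F`-hyperderivatives: `𝒮^F_0 f = f`;
`(𝒮^F_1 f)·p_F = f'`; linearity; the Leibniz rule; and the composition rule
`𝒮^F_m 𝒮^F_n = 𝒮^F_n 𝒮^F_m = ∑_k binomF(k;m,n) 𝒮^F_k` (a finite sum, since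
`binomF(k;m,n) = 0` for `k > m + n`). -/
theorem hyper_basic (R : Type*) [CommRing R] (𝓕 : FormalGroupLaw R)
    (f g : ℤ → R) (hf : IsLaurent f) (hg : IsLaurent g) (lam : R) (m n : ℕ) :
    𝓕.hyper 0 f = f ∧
    mulS 𝓕.pF (𝓕.hyper 1 f) = fderiv1 f ∧
    𝓕.hyper n (fun z => lam * f z + g z)
      = (fun z => lam * 𝓕.hyper n f z + 𝓕.hyper n g z) ∧
    𝓕.hyper n (mulS f g)
      = (fun a => ∑ j ∈ Finset.range (n + 1), mulS (𝓕.hyper j f) (𝓕.hyper (n - j) g) a) ∧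
    (∀ k : ℕ, m + n < k → 𝓕.binomF (k : ℤ) (m : ℤ) (n : ℤ) = 0) ∧
    𝓕.hyper m (𝓕.hyper n f) = 𝓕.hyper n (𝓕.hyper m f) ∧
    𝓕.hyper m (𝓕.hyper n f)
      = (fun a => ∑ᶠ k : ℕ, 𝓕.binomF (k : ℤ) (m : ℤ) (n : ℤ) * 𝓕.hyper k f a) := by
  obtain ⟨x, rfl⟩ := exists_hahnSeries hf
  obtain ⟨y, rfl⟩ := exists_hahnSeries hg
  refine ⟨𝓕.hyper_zero _, 𝓕.mulS_pF_hyper_one hf, 𝓕.hyper_linear x y lam n,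
    funext fun a => 𝓕.hyper_mulS x y n a, fun k hk => 𝓕.binomF_eq_zero_of_lt (by omega), ?_,
    𝓕.hyper_hyper x m n⟩
  rw [𝓕.hyper_hyper, 𝓕.hyper_hyper]
  simp only [𝓕.binomF_comm _ m n]
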